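/- The online size Ramsey number of the 4-cycle versus the path on six vertices equals 11, that is, ř(C₄,P₆) = 11. -/

import Mathlib

open SimpleGraph

/-- The set `S` of edges of the infinite complete graph on `ℕ` contains a copy of
the graph `G`: there is an injective map of the vertices of `G` into `ℕ` sending
every edge of `G` into `S`. -/
def HasCopy {V : Type*} (G : SimpleGraph V) (S : Set (Sym2 ℕ)) : Prop :=
  ∃ f : V → ℕ, Function.Injective f ∧ ∀ a b, G.Adj a b → s(f a, f b) ∈ S

/-- `BuilderWinsIn G H R B r` means: in the online Ramsey game with targets a red copy
of `G` and a blue copy of `H`, from the position in which the edges in `R` have been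
colored red and the edges in `B` have been colored blue, Builder has a strategy that
guarantees, against every Painter strategy, that within at most `r` further rounds the
colored edges contain a red copy of `G` or a blue copy of `H`.  (In each round Builder
chooses a previously unchosen non-loop edge of the infinite complete graph on `ℕ`, and
Painter immediately colors it red or blue; so Builder wins within `r + 1` rounds iff he
has already won, or he can choose an edge such that whichever color Painter gives it,
he can win within `r` further rounds.) -/
def BuilderWinsIn {V W : Type*} (G : SimpleGraph V) (H : SimpleGraph W) :
    Set (Sym2 ℕ) → Set (Sym2 ℕ) → ℕ → Prop
  | R, B, 0 => HasCopy G R ∨ HasCopy H B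
  | R, B, (r + 1) => HasCopy G R ∨ HasCopy H B ∨
      ∃ e : Sym2 ℕ, ¬ e.IsDiag ∧ e ∉ R ∧ e ∉ B ∧
        BuilderWinsIn G H (insert e R) B r ∧ BuilderWinsIn G H R (insert e B) r

/-- The online size Ramsey number `ř(G, H)`: the least `t` such that, starting from the
empty position, Builder can force a red copy of `G` or a blue copy of `H` within at
most `t` rounds. -/
noncomputable def onlineRamsey {V W : Type*} (G : SimpleGraph V) (H : SimpleGraph W) : ℕ :=
  sInf {t | BuilderWinsIn G H ∅ ∅ t}

/-!
For the lower bound, Painter colours an edge blue only if red would complete a red `C₄`. Since `C₄`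
is bridgeless and bipartite, the ends of a blue edge are then joined by a red walk of odd length.
Hence the vertices of a blue `P₆` lie in one red component, which costs at least five red edges
besides the five blue ones. Were these all the edges, the red graph would be a tree on those six
vertices; its 2-colouring would be proper for the blue edges as well, making the ten edges a
bipartite graph on six vertices, which has at most nine.

For the upper bound, Builder has a strategy that never uses more than seven vertices. Winning
positions stay winning when edges are added or vertices are permuted, and up to this, 44 positions
suffice to describe it.
-/

section Monotonicity

variable {V W : Type*} {G : SimpleGraph V} {H : SimpleGraph W}
  {R B R' B' : Set (Sym2 ℕ)} {k l : ℕ}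

theorem HasCopy.mono {S T : Set (Sym2 ℕ)} (hST : S ⊆ T) : HasCopy G S → HasCopy G T :=
  fun ⟨f, hf, hS⟩ => ⟨f, hf, fun a b hab => hST (hS a b hab)⟩

theorem HasCopy.encard_edgeSet_le {S : Set (Sym2 ℕ)} (h : HasCopy G S) :
    G.edgeSet.encard ≤ S.encard := by
  obtain ⟨f, hf, hS⟩ := h
  rw [← (Sym2.map.injective hf).encard_image]
  refine Set.encard_le_encard (Set.image_subset_iff.mpr fun e he => ?_)
  induction e with | h a b => exact hS a b he

theorem BuilderWinsIn.of_hasCopy_left (h : HasCopy G R) : BuilderWinsIn G H R B k := by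
  cases k <;> exact Or.inl h

theorem BuilderWinsIn.of_hasCopy_right (h : HasCopy H B) : BuilderWinsIn G H R B k := by
  cases k with
  | zero => exact Or.inr h
  | succ => exact Or.inr (Or.inl h)

theorem BuilderWinsIn.succ (h : BuilderWinsIn G H R B k) : BuilderWinsIn G H R B (k + 1) := by
  induction k generalizing R B with
  | zero => exact h.elim of_hasCopy_left of_hasCopy_right
  | succ k ih =>
    rcases h with hG | hH | ⟨e, hdiag, heR, heB, hred, hblue⟩
    · exact of_hasCopy_left hG
    · exact of_hasCopy_right hH
    · exact Or.inr (Or.inr ⟨e, hdiag, heR, heB, ih hred, ih hblue⟩)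

theorem BuilderWinsIn.mono_rounds (hkl : k ≤ l) (h : BuilderWinsIn G H R B k) :
    BuilderWinsIn G H R B l :=
  Nat.le_induction h (fun _ _ => succ) l hkl

theorem BuilderWinsIn.of_move {e : Sym2 ℕ} (he : ¬ e.IsDiag)
    (hred : BuilderWinsIn G H (insert e R) B k) (hblue : BuilderWinsIn G H R (insert e B) k) :
    BuilderWinsIn G H R B (k + 1) := by
  by_cases heR : e ∈ R
  · exact (Set.insert_eq_of_mem heR ▸ hred).succ
  by_cases heB : e ∈ B
  · exact (Set.insert_eq_of_mem heB ▸ hblue).succ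
  exact Or.inr (Or.inr ⟨e, he, heR, heB, hred, hblue⟩)

theorem BuilderWinsIn.mono (hR : R ⊆ R') (hB : B ⊆ B') (h : BuilderWinsIn G H R B k) :
    BuilderWinsIn G H R' B' k := by
  induction k generalizing R B R' B' with
  | zero => exact h.imp (.mono hR) (.mono hB)
  | succ k ih =>
    rcases h with hG | hH | ⟨e, hdiag, -, -, hred, hblue⟩
    · exact of_hasCopy_left (hG.mono hR)
    · exact of_hasCopy_right (hH.mono hB)
    · exact of_move hdiag (ih (Set.insert_subset_insert hR) hB hred)
        (ih hR (Set.insert_subset_insert hB) hblue)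

end Monotonicity

namespace OnlineRamsey

section OddWalks

variable {V W : Type*} {Γ : SimpleGraph V}

theorem exists_adj_dist_lt {r v : V} (hr : Γ.Reachable r v) (hv : r ≠ v) :
    ∃ u, Γ.Adj v u ∧ Γ.dist r u < Γ.dist r v := by
  obtain ⟨p, hp⟩ := hr.symm.exists_walk_length_eq_dist
  cases p with
  | nil => exact absurd rfl hv
  | cons hadj q =>
    refine ⟨_, hadj, ?_⟩
    rw [dist_comm (v := v), ← hp, dist_comm, Walk.length_cons]
    exact Nat.lt_succ_of_le (dist_le q)

theorem encard_le_encard_edgeSet_add_one_of_reachable {r : V} {S : Set V}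
    (hS : ∀ v ∈ S, Γ.Reachable r v) : S.encard ≤ Γ.edgeSet.encard + 1 := by
  have hparent : ∀ v ∈ S \ {r}, ∃ u, Γ.Adj v u ∧ Γ.dist r u < Γ.dist r v :=
    fun v hv => exists_adj_dist_lt (hS v hv.1) (Ne.symm hv.2)
  choose! parent hadj hlt using hparent
  have hinj : Set.InjOn (fun v => s(v, parent v)) (S \ {r}) := by
    intro v hv w hw heq
    rcases Sym2.eq_iff.mp heq with ⟨h, -⟩ | ⟨hvw, hwv⟩
    · exact h
    · have h₁ := hlt v hv
      have h₂ := hlt w hw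
      rw [← hvw] at h₂
      rw [hwv] at h₁
      exact absurd h₁ h₂.asymm
  exact tsub_le_iff_right.mp ((Set.encard_tsub_one_le_encard_sdiff_singleton S r).trans
    (Set.encard_le_encard_of_injOn (fun v hv => (mem_edgeSet Γ).mpr (hadj v hv)) hinj))

theorem reachable_of_forall_adj {H : SimpleGraph W} {f : W → V}
    (hf : ∀ i j, H.Adj i j → Γ.Reachable (f i) (f j)) {i j : W} (hij : H.Reachable i j) :
    Γ.Reachable (f i) (f j) := by
  obtain ⟨p⟩ := hij
  induction p with
  | nil => rfl
  | cons hadj _ ih => exact (hf _ _ hadj).trans ih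

theorem reachable_deleteEdges_of_not_isBridge {a b : V} (hab : ¬ Γ.IsBridge s(a, b)) {u v : V}
    (h : Γ.Reachable u v) : (Γ.deleteEdges {s(a, b)}).Reachable u v := by
  have hab' : (Γ.deleteEdges {s(a, b)}).Reachable a b := by rwa [isBridge_iff, not_not] at hab
  refine reachable_of_forall_adj (f := id) (fun c d hcd => ?_) h
  by_cases he : s(c, d) = s(a, b)
  · rcases Sym2.eq_iff.mp he with ⟨rfl, rfl⟩ | ⟨rfl, rfl⟩
    exacts [hab', hab'.symm]
  · exact (deleteEdges_adj.mpr ⟨hcd, he⟩).reachable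

theorem isAcyclic_of_encard_edgeSet_lt {S : Set V} (hlt : Γ.edgeSet.encard < S.encard)
    (hS : ∀ u ∈ S, ∀ v ∈ S, Γ.Reachable u v) : Γ.IsAcyclic := by
  rw [isAcyclic_iff_forall_adj_isBridge]
  intro a b hab
  by_contra hbridge
  obtain ⟨r, hr⟩ : S.Nonempty := Set.encard_pos.mp (pos_of_gt hlt)
  have hle := encard_le_encard_edgeSet_add_one_of_reachable fun v hv =>
    reachable_deleteEdges_of_not_isBridge hbridge (hS r hr v hv)
  rw [edgeSet_deleteEdges, Set.encard_sdiff_singleton_add_one (by exact hab)] at hle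
  exact hlt.not_ge hle

theorem induce_connected_of_encard_edgeSet_lt {S : Set V} (hlt : Γ.edgeSet.encard < S.encard)
    (hS : ∀ u ∈ S, ∀ v ∈ S, Γ.Reachable u v) : (Γ.induce S).Connected := by
  obtain ⟨r, hr⟩ : S.Nonempty := Set.encard_pos.mp (pos_of_gt hlt)
  let C := Γ.connectedComponentMk r
  have hle : C.supp.encard ≤ Γ.edgeSet.encard + 1 :=
    encard_le_encard_edgeSet_add_one_of_reachable fun v hv => (ConnectedComponent.exact hv).symm
  have hfin : C.supp.Finite := Set.encard_lt_top_iff.mp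
    (hle.trans_lt (ENat.add_lt_top.mpr ⟨hlt.trans_le le_top, ENat.one_lt_top⟩))
  have hS_eq : S = C.supp := hfin.eq_of_subset_of_encard_le'
    (fun v hv => ConnectedComponent.sound (hS v hv r hr)) (hle.trans (Order.add_one_le_of_lt hlt))
  exact hS_eq ▸ C.connected_toSimpleGraph

theorem four_mul_card_le_of_isBipartite_sup [Finite V] {T H : SimpleGraph V} (hT : T.Connected)
    (hdisj : Disjoint T H) (hbip : (T ⊔ H).IsBipartite) :
    4 * (Nat.card V + Nat.card H.edgeSet) ≤ Nat.card V ^ 2 + 4 := by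
  have hcard := hT.card_vert_le_card_edgeSet_add_one
  have hle := hbip.four_mul_encard_edgeSet_le
  rw [edgeSet_sup, Set.encard_union_eq (disjoint_edgeSet.mpr hdisj)] at hle
  rw [ENat.card_eq_coe_natCard, ← T.edgeSet.toFinite.cast_ncard_eq,
    ← H.edgeSet.toFinite.cast_ncard_eq] at hle
  norm_cast at hle
  rw [Nat.card_coe_set_eq] at hcard ⊢
  omega

theorem four_mul_card_le_of_odd_walks [Finite W] {H : SimpleGraph W}
    (hH : H.Connected) {f : W → V} (hf : Function.Injective f)
    (hnadj : ∀ i j, H.Adj i j → ¬ Γ.Adj (f i) (f j))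
    (hodd : ∀ i j, H.Adj i j → ∃ p : Γ.Walk (f i) (f j), Odd p.length)
    (hlt : Γ.edgeSet.encard < Nat.card W) :
    4 * (Nat.card W + Nat.card H.edgeSet) ≤ Nat.card W ^ 2 + 4 := by
  have hreach : ∀ u ∈ Set.range f, ∀ v ∈ Set.range f, Γ.Reachable u v := by
    rintro _ ⟨i, rfl⟩ _ ⟨j, rfl⟩
    exact reachable_of_forall_adj (fun i j hij => (hodd i j hij).nonempty) (hH i j)
  rw [← ENat.card_eq_coe_natCard, ← Set.encard_univ, ← hf.encard_image, Set.image_univ] at hlt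
  have hconn : (Γ.comap f).Connected :=
    (Iso.connected_iff (G := Γ.comap f) ⟨Equiv.ofInjective f hf, Iff.rfl⟩).mpr
      (induce_connected_of_encard_edgeSet_lt hlt hreach)
  have hdisj : Disjoint (Γ.comap f) H := disjoint_left.mpr fun i j hΓ hH => hnadj i j hH hΓ
  have hbip : (Γ.comap f ⊔ H).IsBipartite := by
    obtain ⟨c⟩ := (isAcyclic_of_encard_edgeSet_lt hlt hreach).colorable_two
    let c' : Γ.Coloring Bool := recolorOfEquiv Γ finTwoEquiv c
    refine (Coloring.mk (fun i => c' (f i)) ?_ : (Γ.comap f ⊔ H).Coloring Bool).colorable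
    rintro i j (hΓ | hH)
    · exact c'.valid hΓ
    · obtain ⟨p, hp⟩ := hodd i j hH
      rwa [c'.odd_length_iff_not_congr, ← not_iff, ← Bool.eq_iff_iff] at hp
  exact four_mul_card_le_of_isBipartite_sup hconn hdisj hbip

end OddWalks

section GreedyPainter

variable {V W : Type*} {G : SimpleGraph V} {H : SimpleGraph W} {R B : Set (Sym2 ℕ)}

/-- The positions reachable against the greedy Painter, who colours an edge blue only if colouring
it red would complete a red copy of `G`. Later red edges preserve this, so the red set of the whole
position may be used instead of the one present when the blue edge was drawn. -/
structure IsGreedyPosition (G : SimpleGraph V) (R B : Set (Sym2 ℕ)) : Prop where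
  red_free : ¬ HasCopy G R
  blue_closes : ∀ e ∈ B, HasCopy G (insert e R)

theorem isGreedyPosition_empty (hG : G ≠ ⊥) : IsGreedyPosition G ∅ ∅ where
  red_free := fun ⟨_, _, hS⟩ => hG (eq_bot_iff_forall_not_adj.mpr hS)
  blue_closes _ h := h.elim

theorem IsGreedyPosition.notMem_red (h : IsGreedyPosition G R B) {e : Sym2 ℕ} (he : e ∈ B) :
    e ∉ R := fun heR => h.red_free (Set.insert_eq_of_mem heR ▸ h.blue_closes e he)

theorem IsGreedyPosition.not_builderWinsIn {N : ℕ}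
    (hH : ∀ R B, IsGreedyPosition G R B → R.encard + B.encard < N → ¬ HasCopy H B) (r : ℕ)
    (h : IsGreedyPosition G R B) (hr : R.encard + B.encard + r < N) :
    ¬ BuilderWinsIn G H R B r := by
  induction r generalizing R B with
  | zero => exact not_or.mpr ⟨h.red_free, hH R B h (le_self_add.trans_lt hr)⟩
  | succ r ih =>
    rintro (hcopy | hcopy | ⟨e, -, -, -, hred, hblue⟩)
    · exact h.red_free hcopy
    · exact hH R B h (le_self_add.trans_lt hr) hcopy
    rw [Nat.cast_succ] at hr
    by_cases hclose : HasCopy G (insert e R)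
    · refine ih ⟨h.red_free, Set.forall_mem_insert.mpr ⟨hclose, h.blue_closes⟩⟩ ?_ hblue
      grw [Set.encard_insert_le]
      simpa only [add_assoc, add_comm, add_left_comm] using hr
    · refine ih ⟨hclose, fun e' he' => (h.blue_closes e' he').mono ?_⟩ ?_ hred
      · exact Set.insert_subset_insert (Set.subset_insert e R)
      · grw [Set.encard_insert_le]
        simpa only [add_assoc, add_comm, add_left_comm] using hr

theorem exists_hom_deleteEdges_of_hasCopy_insert {e : Sym2 ℕ} (hR : ¬ HasCopy G R)
    (he : HasCopy G (insert e R)) :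
    ∃ a b, G.Adj a b ∧ ∃ φ : G.deleteEdges {s(a, b)} →g fromEdgeSet R, s(φ a, φ b) = e := by
  obtain ⟨f, hf, hcopy⟩ := he
  obtain ⟨a, b, hab, rfl⟩ : ∃ a b, G.Adj a b ∧ s(f a, f b) = e := by
    by_contra! hne
    exact hR ⟨f, hf, fun a b hab => (hcopy a b hab).resolve_left (hne a b hab)⟩
  refine ⟨a, b, hab, ⟨f, fun {c d} hcd => ?_⟩, rfl⟩
  obtain ⟨hcd, hne⟩ := deleteEdges_adj.mp hcd
  rw [fromEdgeSet_adj]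
  exact ⟨(hcopy c d hcd).resolve_left fun h => hne (Sym2.map.injective hf h), hf.ne hcd.ne⟩

theorem IsGreedyPosition.exists_odd_red_walk (h : IsGreedyPosition G R B) (c : G.Coloring Bool)
    (hbridge : ∀ a b, G.Adj a b → ¬ G.IsBridge s(a, b)) {u v : ℕ} (huv : s(u, v) ∈ B) :
    ∃ p : (fromEdgeSet R).Walk u v, Odd p.length := by
  obtain ⟨a, b, hab, φ, hφ⟩ :=
    exists_hom_deleteEdges_of_hasCopy_insert h.red_free (h.blue_closes _ huv)
  have hreach := hbridge a b hab
  rw [isBridge_iff, not_not] at hreach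
  obtain ⟨p⟩ := hreach
  have hodd : Odd (p.map φ).length := by
    let c' : (G.deleteEdges {s(a, b)}).Coloring Bool := c.comp (Hom.ofLE (deleteEdges_le _))
    rw [Walk.length_map, c'.odd_length_iff_not_congr, ← not_iff, ← Bool.eq_iff_iff]
    exact c.valid hab
  rcases Sym2.eq_iff.mp hφ with ⟨rfl, rfl⟩ | ⟨rfl, rfl⟩
  · exact ⟨_, hodd⟩
  · exact ⟨_, (p.map φ).length_reverse.symm ▸ hodd⟩

theorem IsGreedyPosition.not_hasCopy_blue [Finite W] (h : IsGreedyPosition G R B)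
    (c : G.Coloring Bool) (hbridge : ∀ a b, G.Adj a b → ¬ G.IsBridge s(a, b)) (hH : H.Connected)
    (hdense : Nat.card W ^ 2 + 4 < 4 * (Nat.card W + Nat.card H.edgeSet))
    (hlt : R.encard + B.encard < (Nat.card W + Nat.card H.edgeSet : ℕ)) : ¬ HasCopy H B := by
  intro hcopy
  have hHB := hcopy.encard_edgeSet_le
  obtain ⟨f, hf, hblue⟩ := hcopy
  have hred : (fromEdgeSet R).edgeSet.encard < Nat.card W := by
    refine lt_of_add_lt_add_right (a := H.edgeSet.encard) ?_
    calc (fromEdgeSet R).edgeSet.encard + H.edgeSet.encard ≤ R.encard + B.encard := by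
          grw [edgeSet_fromEdgeSet, Set.sdiff_subset, hHB]
      _ < (Nat.card W + Nat.card H.edgeSet : ℕ) := hlt
      _ = Nat.card W + H.edgeSet.encard := by
          rw [Nat.card_coe_set_eq, Nat.cast_add, H.edgeSet.toFinite.cast_ncard_eq]
  refine hdense.not_ge (four_mul_card_le_of_odd_walks hH hf (fun i j hij hadj => ?_)
    (fun i j hij => h.exists_odd_red_walk c hbridge (hblue i j hij)) hred)
  exact h.notMem_red (hblue i j hij) ((fromEdgeSet_adj R).mp hadj).1

theorem not_builderWinsIn_of_lt [Finite W] (hG : G ≠ ⊥) (c : G.Coloring Bool)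
    (hbridge : ∀ a b, G.Adj a b → ¬ G.IsBridge s(a, b)) (hH : H.Connected)
    (hdense : Nat.card W ^ 2 + 4 < 4 * (Nat.card W + Nat.card H.edgeSet)) {t : ℕ}
    (ht : t < Nat.card W + Nat.card H.edgeSet) : ¬ BuilderWinsIn G H ∅ ∅ t :=
  (isGreedyPosition_empty hG).not_builderWinsIn (N := Nat.card W + Nat.card H.edgeSet)
    (fun _ _ h => h.not_hasCopy_blue c hbridge hH hdense) t (by
      rw [Set.encard_empty, add_zero, zero_add]
      exact_mod_cast ht)

theorem not_isBridge_cycleGraph_four (a b : Fin 4) (hab : (cycleGraph 4).Adj a b) :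
    ¬ (cycleGraph 4).IsBridge s(a, b) := by
  rw [isBridge_iff]
  revert a b
  decide

theorem le_of_builderWinsIn_C4_P6 {t : ℕ} (ht : BuilderWinsIn (cycleGraph 4) (pathGraph 6) ∅ ∅ t) :
    11 ≤ t := by
  have hedges := (pathGraph_connected 5).card_vert_le_card_edgeSet_add_one
  rw [Nat.card_fin] at hedges
  by_contra! hlt
  refine not_builderWinsIn_of_lt ?_ (cycleGraph.bicoloring_of_even 4 (by decide))
    not_isBridge_cycleGraph_four (pathGraph_connected 5) ?_ ?_ ht
  · exact ne_bot_iff_exists_adj.mpr ⟨0, 1, by decide⟩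
  · rw [Nat.card_fin]
    omega
  · rw [Nat.card_fin]
    omega

end GreedyPainter

section StrategyBook

variable {V W α β : Type*} {G : SimpleGraph V} {H : SimpleGraph W}

/-- What Builder does once Painter has answered his move: point at the copy of the target graph
on `V` that the answer completes, or follow entry `i` of the strategy book, each vertex `x` of that
entry being played at the vertex `σ x`. -/
inductive FollowUp (V α : Type*)
  | copy (f : V → α)
  | goto (i : ℕ) (σ : α → α := id)

/-- One entry of a strategy book on the board `α`: Builder is to win within `rounds` rounds once
the edges `red` and `blue` are present, by choosing `move` and then acting according to the colour
it receives. -/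
structure BookEntry (V W α : Type*) where
  rounds : ℕ
  red : Finset (Sym2 α)
  blue : Finset (Sym2 α)
  move : Sym2 α
  ifRed : FollowUp V α
  ifBlue : FollowUp W α

/-- Wherever the vertices `α` are placed in `ℕ`, Builder wins within `k` rounds from the position
with red edges `R` and blue edges `B`. -/
def WinsOnBoard (G : SimpleGraph V) (H : SimpleGraph W) (R B : Finset (Sym2 α)) (k : ℕ) : Prop :=
  ∀ v : α ↪ ℕ, BuilderWinsIn G H (Sym2.map v '' R) (Sym2.map v '' B) k

theorem hasCopy_image {S : Finset (Sym2 α)} {f : V → α} (hf : Function.Injective f)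
    (hS : ∀ a b, G.Adj a b → s(f a, f b) ∈ S) (v : α ↪ ℕ) : HasCopy G (Sym2.map v '' S) :=
  ⟨v ∘ f, v.injective.comp hf, fun a b hab => ⟨_, hS a b hab, Sym2.map_mk ..⟩⟩

theorem WinsOnBoard.of_image_subset [DecidableEq β] {R B : Finset (Sym2 α)}
    {R' B' : Finset (Sym2 β)} {k : ℕ} (σ : α ↪ β) (hR : R.image (Sym2.map σ) ⊆ R')
    (hB : B.image (Sym2.map σ) ⊆ B') (h : WinsOnBoard G H R B k) : WinsOnBoard G H R' B' k := by
  intro v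
  have himage {S : Finset (Sym2 α)} {S' : Finset (Sym2 β)}
      (hS : S.image (Sym2.map σ) ⊆ S') : Sym2.map (σ.trans v) '' S ⊆ Sym2.map v '' S' := by
    rintro _ ⟨e, he, rfl⟩
    exact ⟨e.map σ, hS (Finset.mem_image_of_mem _ he), Sym2.map_map ..⟩
  exact (h _).mono (himage hR) (himage hB)

variable [DecidableEq α]

theorem WinsOnBoard.of_move {R B : Finset (Sym2 α)} {e : Sym2 α} {k : ℕ} (he : ¬ e.IsDiag)
    (hred : WinsOnBoard G H (insert e R) B k) (hblue : WinsOnBoard G H R (insert e B) k) :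
    WinsOnBoard G H R B (k + 1) := by
  intro v
  refine BuilderWinsIn.of_move (e := e.map v) ((Sym2.isDiag_map v.injective).not.mpr he) ?_ ?_
  · simpa only [Finset.coe_insert, Set.image_insert_eq] using hred v
  · simpa only [Finset.coe_insert, Set.image_insert_eq] using hblue v

/-- `φ` lets Builder win within `k` rounds, the last one included, if the answer to his move has
led to red edges `R` and blue edges `B`: either `φ` exhibits a copy of the target `Γ` in the colour
class `S`, or it points to an entry needing fewer than `k` rounds that embeds into the position. -/
def FollowUp.IsSound {U : Type*} (book : List (BookEntry V W α)) (Γ : SimpleGraph U)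
    (S R B : Finset (Sym2 α)) (k : ℕ) : FollowUp U α → Prop
  | copy f => Function.Injective f ∧ ∀ a b, Γ.Adj a b → s(f a, f b) ∈ S
  | goto i σ => ∃ E ∈ book[i]?, E.rounds < k ∧ Function.Injective σ ∧
      E.red.image (Sym2.map σ) ⊆ R ∧ E.blue.image (Sym2.map σ) ⊆ B

instance {U : Type*} [Fintype α] [Fintype U] [DecidableEq U] (book : List (BookEntry V W α))
    (Γ : SimpleGraph U) [DecidableRel Γ.Adj] (S R B : Finset (Sym2 α)) (k : ℕ) (φ : FollowUp U α) :
    Decidable (φ.IsSound book Γ S R B k) := by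
  cases φ <;> unfold FollowUp.IsSound <;> infer_instance

theorem FollowUp.IsSound.winsOnBoard {U : Type*} {book : List (BookEntry V W α)}
    {Γ : SimpleGraph U} {S R B : Finset (Sym2 α)} {k : ℕ} {φ : FollowUp U α}
    (hbook : ∀ E ∈ book, E.rounds < k + 1 → WinsOnBoard G H E.red E.blue E.rounds)
    (hcopy : ∀ v : α ↪ ℕ, HasCopy Γ (Sym2.map v '' S) →
      BuilderWinsIn G H (Sym2.map v '' R) (Sym2.map v '' B) k)
    (h : φ.IsSound book Γ S R B (k + 1)) : WinsOnBoard G H R B k := by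
  cases φ with
  | copy f => exact fun v => hcopy v (hasCopy_image h.1 h.2 v)
  | goto i σ =>
    obtain ⟨E, hE, hlt, hσ, hR, hB⟩ := h
    have hwin := (hbook E (List.mem_of_getElem? hE) hlt).of_image_subset ⟨σ, hσ⟩ hR hB
    exact fun v => (hwin v).mono_rounds (Nat.le_of_lt_succ hlt)

/-- Both follow-ups of the entry are sound for the position resulting from its move. -/
def BookEntry.IsSound (book : List (BookEntry V W α)) (G : SimpleGraph V) (H : SimpleGraph W)
    (E : BookEntry V W α) : Prop :=
  0 < E.rounds ∧ ¬ E.move.IsDiag ∧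
    E.ifRed.IsSound book G (insert E.move E.red) (insert E.move E.red) E.blue E.rounds ∧
    E.ifBlue.IsSound book H (insert E.move E.blue) E.red (insert E.move E.blue) E.rounds

instance [Fintype α] [Fintype V] [DecidableEq V] [Fintype W] [DecidableEq W]
    (book : List (BookEntry V W α)) (G : SimpleGraph V) [DecidableRel G.Adj] (H : SimpleGraph W)
    [DecidableRel H.Adj] (E : BookEntry V W α) : Decidable (E.IsSound book G H) := by
  unfold BookEntry.IsSound; infer_instance

theorem winsOnBoard_of_forall_isSound {book : List (BookEntry V W α)}
    (hbook : ∀ E ∈ book, E.IsSound book G H) (E : BookEntry V W α) (hE : E ∈ book) :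
    WinsOnBoard G H E.red E.blue E.rounds := by
  induction hk : E.rounds using Nat.strong_induction_on generalizing E with
  | _ k ih =>
    obtain ⟨hpos, hdiag, hred, hblue⟩ := hbook E hE
    rw [hk] at hpos hred hblue
    obtain ⟨k, rfl⟩ := Nat.exists_eq_succ_of_ne_zero hpos.ne'
    have ih' : ∀ E ∈ book, E.rounds < k + 1 → WinsOnBoard G H E.red E.blue E.rounds :=
      fun E hE hlt => ih _ hlt E hE rfl
    exact .of_move hdiag (hred.winsOnBoard ih' fun _ => .of_hasCopy_left)
      (hblue.winsOnBoard ih' fun _ => .of_hasCopy_right)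

/-- A strategy book for red `C₄` against blue `P₆`, found by computer search; its first entry is the
empty position. -/
def strategyBook : List (BookEntry (Fin 4) (Fin 6) (Fin 7)) :=
  [⟨11, ∅, ∅,
    s(0, 1), .goto 1, .goto 2⟩,
   ⟨10, {s(0, 1)}, ∅,
    s(0, 2), .goto 3, .goto 4⟩,
   ⟨10, ∅, {s(0, 1)},
    s(0, 2), .goto 4 ![0, 2, 1, 3, 4, 5, 6], .goto 5⟩,
   ⟨9, {s(0, 1), s(0, 2)}, ∅,
    s(1, 3), .goto 6, .goto 7⟩,
   ⟨9, {s(0, 1)}, {s(0, 2)},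
    s(0, 3), .goto 8, .goto 5 ![0, 3, 2, 1, 4, 5, 6]⟩,
   ⟨8, ∅, {s(0, 1), s(0, 2)},
    s(1, 3), .goto 9, .goto 12⟩,
   ⟨8, {s(0, 1), s(0, 2), s(1, 3)}, ∅,
    s(2, 4), .goto 10, .goto 11⟩,
   ⟨8, {s(0, 1), s(0, 2)}, {s(1, 3)},
    s(1, 2), .goto 8 ![1, 0, 3, 2, 4, 5, 6], .goto 9 ![1, 2, 3, 0, 4, 5, 6]⟩,
   ⟨7, {s(0, 1), s(0, 3)}, {s(0, 2)},
    s(1, 4), .goto 13, .goto 14⟩,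
   ⟨7, {s(1, 3)}, {s(0, 1), s(0, 2)},
    s(1, 4), .goto 15, .goto 12 ![0, 1, 2, 4, 3, 5, 6]⟩,
   ⟨7, {s(0, 1), s(0, 2), s(1, 3), s(2, 4)}, ∅,
    s(1, 4), .copy ![0, 1, 4, 2], .goto 13 ![1, 0, 4, 3, 2, 5, 6]⟩,
   ⟨7, {s(0, 1), s(0, 2), s(1, 3)}, {s(2, 4)},
    s(1, 2), .goto 13 ![2, 1, 4, 0, 3, 5, 6], .goto 15 ![2, 1, 4, 3, 0, 5, 6]⟩,
   ⟨6, ∅, {s(0, 1), s(0, 2), s(1, 3)},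
    s(2, 4), .goto 16, .goto 20⟩,
   ⟨6, {s(0, 1), s(0, 3), s(1, 4)}, {s(0, 2)},
    s(3, 4), .copy ![0, 1, 4, 3], .goto 17⟩,
   ⟨6, {s(0, 1), s(0, 3)}, {s(0, 2), s(1, 4)},
    s(1, 2), .goto 18, .goto 16 ![2, 1, 0, 4, 3, 5, 6]⟩,
   ⟨6, {s(1, 3), s(1, 4)}, {s(0, 1), s(0, 2)},
    s(2, 3), .goto 19, .goto 16 ![0, 2, 1, 3, 4, 5, 6]⟩,
   ⟨5, {s(2, 4)}, {s(0, 1), s(0, 2), s(1, 3)},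
    s(3, 4), .goto 21, .goto 20 ![1, 0, 3, 2, 4, 5, 6]⟩,
   ⟨5, {s(0, 1), s(0, 3), s(1, 4)}, {s(0, 2), s(3, 4)},
    s(0, 5), .goto 22, .goto 23⟩,
   ⟨5, {s(0, 1), s(0, 3), s(1, 2)}, {s(0, 2), s(1, 4)},
    s(2, 4), .goto 24, .goto 25⟩,
   ⟨5, {s(1, 3), s(1, 4), s(2, 3)}, {s(0, 1), s(0, 2)},
    s(2, 4), .copy ![1, 3, 2, 4], .goto 25 ![1, 4, 0, 3, 2, 5, 6]⟩,
   ⟨4, ∅, {s(0, 1), s(0, 2), s(1, 3), s(2, 4)},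
    s(3, 5), .goto 26, .copy ![4, 2, 0, 1, 3, 5]⟩,
   ⟨4, {s(2, 4), s(3, 4)}, {s(0, 1), s(0, 2), s(1, 3)},
    s(2, 5), .goto 27, .goto 26 ![0, 1, 2, 3, 5, 4, 6]⟩,
   ⟨4, {s(0, 1), s(0, 3), s(0, 5), s(1, 4)}, {s(0, 2), s(3, 4)},
    s(1, 3), .goto 28, .goto 29⟩,
   ⟨4, {s(0, 1), s(0, 3), s(1, 4)}, {s(0, 2), s(0, 5), s(3, 4)},
    s(1, 2), .goto 30, .goto 31⟩,
   ⟨4, {s(0, 1), s(0, 3), s(1, 2), s(2, 4)}, {s(0, 2), s(1, 4)},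
    s(2, 3), .copy ![0, 1, 2, 3], .goto 32⟩,
   ⟨4, {s(0, 1), s(0, 3)}, {s(0, 2), s(1, 4), s(2, 4)},
    s(3, 5), .goto 33, .goto 31 ![4, 0, 2, 5, 3, 1, 6]⟩,
   ⟨3, {s(3, 5)}, {s(0, 1), s(0, 2), s(1, 3), s(2, 4)},
    s(4, 5), .goto 34, .copy ![3, 1, 0, 2, 4, 5]⟩,
   ⟨3, {s(2, 4), s(2, 5), s(3, 4)}, {s(0, 1), s(0, 2), s(1, 3)},
    s(4, 6), .goto 35, .goto 36⟩,
   ⟨3, {s(0, 1), s(0, 3), s(0, 5), s(1, 3), s(1, 4)}, {s(0, 2), s(3, 4)},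
    s(3, 5), .copy ![0, 1, 3, 5], .goto 37⟩,
   ⟨3, {s(0, 1), s(0, 5), s(1, 4)}, {s(0, 2), s(1, 3), s(3, 4)},
    s(4, 5), .copy ![0, 1, 4, 5], .goto 36 ![3, 4, 1, 5, 0, 6, 2]⟩,
   ⟨3, {s(0, 1), s(0, 3), s(1, 2), s(1, 4)}, {s(0, 2), s(0, 5), s(3, 4)},
    s(3, 5), .goto 37 ![3, 1, 4, 0, 2, 5, 6], .goto 34 ![5, 0, 3, 2, 4, 1, 6]⟩,
   ⟨3, {s(1, 4)}, {s(0, 2), s(0, 5), s(1, 2), s(3, 4)},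
    s(4, 5), .goto 36 ![0, 2, 5, 1, 4, 6, 3], .copy ![1, 2, 0, 5, 4, 3]⟩,
   ⟨3, {s(0, 1), s(0, 3), s(1, 2), s(2, 4)}, {s(0, 2), s(1, 4), s(2, 3)},
    s(0, 4), .copy ![0, 1, 2, 4], .goto 38⟩,
   ⟨3, {s(0, 1), s(0, 3), s(3, 5)}, {s(0, 2), s(1, 4), s(2, 4)},
    s(1, 5), .copy ![0, 1, 5, 3], .goto 34 ![4, 1, 2, 5, 0, 3, 6]⟩,
   ⟨2, {s(3, 5), s(4, 5)}, {s(0, 1), s(0, 2), s(1, 3), s(2, 4)},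
    s(3, 6), .goto 39, .copy ![4, 2, 0, 1, 3, 6]⟩,
   ⟨2, {s(2, 4), s(2, 5), s(3, 4), s(4, 6)}, {s(0, 1), s(0, 2), s(1, 3)},
    s(3, 5), .copy ![2, 4, 3, 5], .goto 40⟩,
   ⟨2, {s(2, 4), s(3, 4)}, {s(0, 1), s(0, 2), s(1, 3), s(4, 6)},
    s(2, 6), .goto 41, .copy ![3, 1, 0, 2, 6, 4]⟩,
   ⟨2, {s(0, 3), s(0, 5), s(1, 3), s(1, 4)}, {s(0, 2), s(3, 4), s(3, 5)},
    s(0, 4), .copy ![0, 3, 1, 4], .goto 42⟩,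
   ⟨2, {s(0, 1), s(0, 3)}, {s(0, 2), s(0, 4), s(1, 4), s(2, 3)},
    s(1, 5), .goto 43, .copy ![3, 2, 0, 4, 1, 5]⟩,
   ⟨1, {s(3, 5), s(3, 6), s(4, 5)}, {s(0, 1), s(0, 2), s(1, 3), s(2, 4)},
    s(4, 6), .copy ![3, 5, 4, 6], .copy ![3, 1, 0, 2, 4, 6]⟩,
   ⟨1, {s(2, 4), s(2, 5), s(4, 6)}, {s(0, 1), s(0, 2), s(1, 3), s(3, 5)},
    s(5, 6), .copy ![2, 4, 6, 5], .copy ![2, 0, 1, 3, 5, 6]⟩,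
   ⟨1, {s(2, 4), s(2, 6), s(3, 4)}, {s(0, 1), s(0, 2), s(1, 3), s(4, 6)},
    s(3, 6), .copy ![2, 4, 3, 6], .copy ![2, 0, 1, 3, 6, 4]⟩,
   ⟨1, {s(0, 3), s(0, 5), s(1, 3)}, {s(0, 2), s(0, 4), s(3, 4), s(3, 5)},
    s(1, 5), .copy ![0, 3, 1, 5], .copy ![1, 5, 3, 4, 0, 2]⟩,
   ⟨1, {s(0, 1), s(0, 3), s(1, 5)}, {s(0, 2), s(0, 4), s(1, 4), s(2, 3)},
    s(3, 5), .copy ![0, 1, 5, 3], .copy ![1, 4, 0, 2, 3, 5]⟩]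

instance (n : ℕ) : DecidableRel (pathGraph n).Adj :=
  fun _ _ => decidable_of_iff' _ pathGraph_adj

theorem strategyBook_isSound :
    ∀ E ∈ strategyBook, E.IsSound strategyBook (cycleGraph 4) (pathGraph 6) := by
  decide +kernel

theorem builderWinsIn_C4_P6 : BuilderWinsIn (cycleGraph 4) (pathGraph 6) ∅ ∅ 11 := by
  simpa using winsOnBoard_of_forall_isSound strategyBook_isSound _ List.mem_cons_self
    Fin.valEmbedding

end StrategyBook

end OnlineRamsey

/-- The online size Ramsey number of the 4-cycle versus the path on six vertices
equals 11: `ř(C₄, P₆) = 11`. -/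
theorem onlineRamsey_C4_P6 : onlineRamsey (cycleGraph 4) (pathGraph 6) = 11 := by
  have hwin : 11 ∈ {t | BuilderWinsIn (cycleGraph 4) (pathGraph 6) ∅ ∅ t} :=
    OnlineRamsey.builderWinsIn_C4_P6
  exact le_antisymm (Nat.sInf_le hwin)
    (le_csInf ⟨11, hwin⟩ fun _ => OnlineRamsey.le_of_builderWinsIn_C4_P6)
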